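/- Let K be a field and q ∈ K such that (q;q)_j := ∏_{i=1}^{j} (1 − q^i) is nonzero for every j ≥ 1. Let A be an associative unital K-algebra and x, y ∈ A elements satisfying y·x = q·(x·y). Then for all natural numbers m, n: (1/((q;q)_m·(q;q)_n)) · (yⁿ·xᵐ) = ∑_{k=0}^{min(m,n)} ((−1)^k/((q;q)_{m−k}·(q;q)_k·(q;q)_{n−k})) · (x^{m−k}·(x·y)^k·y^{n−k}). -/

import Mathlib

/-!
Moving every `y` to the right of every `x` turns both sides of the pentagon identity into multiples
of `x ^ m * y ^ n`. After clearing denominators, the equality of the two coefficients is Cauchy's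
expansion of `z ^ m` in the polynomials `∏ i < k, (z - q ^ i)`, evaluated at `z = q ^ n`.
Written with Gaussian binomials, the coefficients are polynomials in `q`, and the identity holds
over every commutative ring.
-/

open Finset

section GaussBinom

variable {R : Type*} [Semiring R]

/-- The Gaussian binomial coefficient `[n choose k]_q`. It is defined by the `q`-Pascal recursion,
rather than as a quotient of `q`-Pochhammer symbols, so that it makes sense for every `q`. -/
def gaussBinom (q : R) : ℕ → ℕ → R
  | _, 0 => 1
  | 0, _ + 1 => 0
  | n + 1, k + 1 => gaussBinom q n k + q ^ (k + 1) * gaussBinom q n (k + 1)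

@[simp] lemma gaussBinom_zero_right (q : R) (n : ℕ) : gaussBinom q n 0 = 1 := by
  cases n <;> rfl

@[simp] lemma gaussBinom_zero_succ (q : R) (k : ℕ) : gaussBinom q 0 (k + 1) = 0 := rfl

lemma gaussBinom_succ_succ (q : R) (n k : ℕ) :
    gaussBinom q (n + 1) (k + 1) =
      gaussBinom q n k + q ^ (k + 1) * gaussBinom q n (k + 1) := rfl

lemma gaussBinom_eq_zero_of_lt (q : R) {n k : ℕ} (h : n < k) : gaussBinom q n k = 0 := by
  induction n generalizing k with
  | zero => rw [← Nat.succ_pred_eq_of_pos h, gaussBinom_zero_succ]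
  | succ n ih =>
    obtain _ | k := k
    · exact absurd h (Nat.not_lt_zero _)
    · rw [gaussBinom_succ_succ, ih (by lia), ih (by lia), mul_zero, add_zero]

end GaussBinom

section QPochhammer

variable {R : Type*} [CommRing R]

/-- The finite `q`-Pochhammer symbol `(q;q)_n = ∏_{i=1}^n (1 - q^i)`. -/
def qPochhammer (q : R) (n : ℕ) : R := ∏ i ∈ range n, (1 - q ^ (i + 1))

@[simp] lemma qPochhammer_zero (q : R) : qPochhammer q 0 = 1 := prod_range_zero _

lemma qPochhammer_succ (q : R) (n : ℕ) :
    qPochhammer q (n + 1) = qPochhammer q n * (1 - q ^ (n + 1)) := prod_range_succ _ _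

lemma one_sub_pow_succ_mul_gaussBinom (q : R) (n k : ℕ) :
    (1 - q ^ (n + 1)) * gaussBinom q n k =
      gaussBinom q (n + 1) (k + 1) * (1 - q ^ (k + 1)) := by
  induction n generalizing k with
  | zero => cases k <;> simp [gaussBinom_succ_succ]
  | succ n ih =>
    cases k with
    | zero =>
      have ih₀ := ih 0
      rw [gaussBinom_zero_right] at ih₀
      rw [gaussBinom_succ_succ, gaussBinom_zero_right]
      linear_combination q * ih₀
    | succ k =>
      linear_combination q ^ (k + 2) * ih (k + 1) + q * ih k -
        (1 - q ^ (k + 2)) * gaussBinom_succ_succ q (n + 1) (k + 1) +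
        q * (1 - q ^ (n + 1)) * gaussBinom_succ_succ q n k

lemma gaussBinom_mul_qPochhammer_mul_qPochhammer (q : R) {n k : ℕ} (hk : k ≤ n) :
    gaussBinom q n k * qPochhammer q k * qPochhammer q (n - k) = qPochhammer q n := by
  induction n generalizing k with
  | zero => simp [Nat.le_zero.1 hk]
  | succ n ih =>
    cases k with
    | zero => simp
    | succ k =>
      rw [Nat.add_sub_add_right, qPochhammer_succ, qPochhammer_succ,
        ← ih (Nat.succ_le_succ_iff.1 hk)]
      linear_combination -qPochhammer q k * qPochhammer q (n - k) *
        one_sub_pow_succ_mul_gaussBinom q n k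

lemma gaussBinom_eq_div {K : Type*} [Field K] {q : K} {n k : ℕ} (hk : k ≤ n)
    (hP : qPochhammer q k * qPochhammer q (n - k) ≠ 0) :
    gaussBinom q n k = qPochhammer q n / (qPochhammer q k * qPochhammer q (n - k)) :=
  eq_div_of_mul_eq hP (by rw [← mul_assoc, gaussBinom_mul_qPochhammer_mul_qPochhammer q hk])

lemma sum_gaussBinom_mul_prod_sub_pow (q z : R) (m : ℕ) :
    ∑ k ∈ range (m + 1), gaussBinom q m k * ∏ i ∈ range k, (z - q ^ i) = z ^ m := by
  induction m with
  | zero => simp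
  | succ m ih =>
    let P (k : ℕ) : R := ∏ i ∈ range k, (z - q ^ i)
    have hP (k : ℕ) : P (k + 1) + q ^ k * P k = P k * z := by
      rw [show P (k + 1) = P k * (z - q ^ k) from prod_range_succ _ _]
      ring
    calc
      _ = ∑ k ∈ range (m + 1), gaussBinom q m k * P (k + 1) +
          (∑ k ∈ range (m + 1), gaussBinom q m (k + 1) * (q ^ (k + 1) * P (k + 1)) +
            gaussBinom q m 0 * (q ^ 0 * P 0)) := by
        rw [sum_range_succ', ← add_assoc, ← sum_add_distrib]
        congr 1
        · refine sum_congr rfl fun k _ => ?_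
          rw [gaussBinom_succ_succ]
          ring
        · simp [P]
      _ = ∑ k ∈ range (m + 1), gaussBinom q m k * P (k + 1) +
          ∑ k ∈ range (m + 1), gaussBinom q m k * (q ^ k * P k) := by
        rw [← sum_range_succ' fun k => gaussBinom q m k * (q ^ k * P k), sum_range_succ _ (m + 1),
          gaussBinom_eq_zero_of_lt q m.lt_succ_self, zero_mul, add_zero]
      _ = (∑ k ∈ range (m + 1), gaussBinom q m k * P k) * z := by
        simp only [← sum_add_distrib, ← mul_add, hP, sum_mul, mul_assoc]
      _ = z ^ (m + 1) := by rw [ih, pow_succ]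

lemma prod_pow_sub_pow (q : R) (n k : ℕ) :
    ∏ i ∈ range k, (q ^ n - q ^ i) =
      (-1) ^ k * q ^ k.choose 2 * (gaussBinom q n k * qPochhammer q k) := by
  induction n generalizing k with
  | zero => cases k <;> simp [prod_range_succ']
  | succ n ih =>
    cases k with
    | zero => simp
    | succ k =>
      have hfactor : ∏ i ∈ range k, (q ^ (n + 1) - q ^ (i + 1)) =
          q ^ k * ∏ i ∈ range k, (q ^ n - q ^ i) := by
        simp only [pow_succ' q, ← mul_sub, prod_mul_distrib, prod_const, card_range]
      rw [prod_range_succ', hfactor, ih, qPochhammer_succ, Nat.choose_succ_succ' k 1,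
        Nat.choose_one_right]
      linear_combination (-1) ^ (k + 1) * q ^ (k + k.choose 2) * qPochhammer q k *
        one_sub_pow_succ_mul_gaussBinom q n k

lemma pow_mul_eq_sum_gaussBinom (q : R) (m n : ℕ) :
    q ^ (m * n) = ∑ k ∈ range (min m n + 1),
      (-1) ^ k * gaussBinom q m k * gaussBinom q n k * qPochhammer q k * q ^ k.choose 2 := by
  calc
    q ^ (m * n) = ∑ k ∈ range (m + 1),
        (-1) ^ k * gaussBinom q m k * gaussBinom q n k * qPochhammer q k * q ^ k.choose 2 := by
      rw [mul_comm, pow_mul, ← sum_gaussBinom_mul_prod_sub_pow q]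
      refine sum_congr rfl fun k _ => ?_
      rw [prod_pow_sub_pow]
      ring
    _ = _ := by
      refine (sum_subset (range_mono (by lia)) fun k hkm hk => ?_).symm
      have hnk : n < k := by
        rw [mem_range] at hkm hk
        lia
      rw [gaussBinom_eq_zero_of_lt q hnk, mul_zero, zero_mul, zero_mul]

end QPochhammer

section QuantumTorus

variable {R A : Type*} [CommSemiring R] [Semiring A] [Algebra R A] {q : R} {x y : A}

lemma pow_right_of_q_commute (hxy : y * x = q • (x * y)) (m : ℕ) :
    y * x ^ m = q ^ m • (x ^ m * y) := by
  have hsemiconj : SemiconjBy y x (q • x) := by rw [SemiconjBy, hxy, smul_mul_assoc]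
  rw [(hsemiconj.pow_right m).eq, smul_pow, smul_mul_assoc]

lemma pow_pow_of_q_commute (hxy : y * x = q • (x * y)) (m n : ℕ) :
    y ^ n * x ^ m = q ^ (m * n) • (x ^ m * y ^ n) := by
  have hyx : y * x ^ m = q ^ m • (x ^ m * y) := pow_right_of_q_commute hxy m
  induction n with
  | zero => simp
  | succ n ih =>
    rw [pow_succ y, mul_assoc, hyx, mul_smul_comm, ← mul_assoc, ih, smul_mul_assoc, smul_smul,
      mul_assoc, ← pow_add, mul_add_one, add_comm m]

lemma mul_pow_of_q_commute (hxy : y * x = q • (x * y)) (k : ℕ) :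
    (x * y) ^ k = q ^ k.choose 2 • (x ^ k * y ^ k) := by
  induction k with
  | zero => simp
  | succ k ih =>
    have hyx : y ^ k * x = q ^ k • (x * y ^ k) := by
      simpa using pow_pow_of_q_commute hxy 1 k
    calc
      (x * y) ^ (k + 1) = q ^ k.choose 2 • (x ^ k * (y ^ k * x) * y) := by
        rw [pow_succ, ih, smul_mul_assoc]
        simp only [mul_assoc]
      _ = q ^ (k.choose 2 + k) • (x ^ (k + 1) * y ^ (k + 1)) := by
        rw [hyx, mul_smul_comm, smul_mul_assoc, smul_smul, ← pow_add, pow_succ x, pow_succ y]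
        simp only [mul_assoc]
      _ = q ^ (k + 1).choose 2 • (x ^ (k + 1) * y ^ (k + 1)) := by
        rw [Nat.choose_succ_succ' k 1, Nat.choose_one_right, Nat.add_comm (k.choose 2)]

lemma pow_sub_mul_mul_pow_mul_pow_sub_of_q_commute (hxy : y * x = q • (x * y)) {m n k : ℕ}
    (hm : k ≤ m) (hn : k ≤ n) :
    x ^ (m - k) * (x * y) ^ k * y ^ (n - k) = q ^ k.choose 2 • (x ^ m * y ^ n) := by
  rw [mul_pow_of_q_commute hxy, mul_smul_comm, smul_mul_assoc, ← mul_assoc,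
    pow_sub_mul_pow x hm, mul_assoc, pow_mul_pow_sub y hn]

end QuantumTorus

/-- The coefficient is `(q;q)_m * (q;q)_n` times the quotient
`(-1)^k / ((q;q)_{m-k} * (q;q)_k * (q;q)_{n-k})` of the pentagon identity. -/
theorem pentagon_identity_coefficients_general {R A : Type*} [CommRing R] [Semiring A]
    [Algebra R A] {q : R} {x y : A} (hxy : y * x = q • (x * y)) (m n : ℕ) :
    y ^ n * x ^ m = ∑ k ∈ range (min m n + 1),
      ((-1) ^ k * gaussBinom q m k * gaussBinom q n k * qPochhammer q k) •
        (x ^ (m - k) * (x * y) ^ k * y ^ (n - k)) := by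
  rw [pow_pow_of_q_commute hxy, pow_mul_eq_sum_gaussBinom, sum_smul]
  refine sum_congr rfl fun k hk => ?_
  rw [mem_range] at hk
  rw [pow_sub_mul_mul_pow_mul_pow_sub_of_q_commute hxy (by lia) (by lia), smul_smul]

/-- **Pentagon identity for quantum dilogarithms, coefficient of `u^m v^n`.**
Let `K` be a field and `q ∈ K` with `(q;q)_j = ∏_{i=1}^j (1 - q^i) ≠ 0` for all
`j ≥ 1`.  Let `A` be an associative unital `K`-algebra and `x, y ∈ A` with
`y x = q (x y)`.  Then for all `m n : ℕ`:
`(1/((q;q)_m (q;q)_n)) • (y^n x^m)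
  = ∑_{k=0}^{min m n} ((-1)^k/((q;q)_{m-k} (q;q)_k (q;q)_{n-k}))
      • (x^(m-k) (x y)^k y^(n-k))`. -/
theorem pentagon_identity_coefficients {K A : Type*} [Field K] [Ring A] [Algebra K A]
    (q : K) (hq : ∀ j : ℕ, 1 ≤ j → (∏ i ∈ Finset.range j, (1 - q ^ (i + 1))) ≠ 0)
    (x y : A) (hxy : y * x = q • (x * y)) :
    ∀ m n : ℕ,
      ((1 : K) / ((∏ i ∈ Finset.range m, (1 - q ^ (i + 1))) *
          (∏ i ∈ Finset.range n, (1 - q ^ (i + 1))))) • (y ^ n * x ^ m) =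
        ∑ k ∈ Finset.range (min m n + 1),
          (((-1 : K) ^ k /
              ((∏ i ∈ Finset.range (m - k), (1 - q ^ (i + 1))) *
                (∏ i ∈ Finset.range k, (1 - q ^ (i + 1))) *
                (∏ i ∈ Finset.range (n - k), (1 - q ^ (i + 1))))) •
            (x ^ (m - k) * (x * y) ^ k * y ^ (n - k))) := by
  intro m n
  have hP (j : ℕ) : qPochhammer q j ≠ 0 := by
    obtain rfl | hj := Nat.eq_zero_or_pos j
    · simp
    · exact hq j hj
  simp only [← qPochhammer.eq_def]
  rw [pentagon_identity_coefficients_general hxy, smul_sum]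
  refine sum_congr rfl fun k hk => ?_
  rw [mem_range] at hk
  rw [smul_smul, gaussBinom_eq_div (show k ≤ m by lia) (mul_ne_zero (hP _) (hP _)),
    gaussBinom_eq_div (show k ≤ n by lia) (mul_ne_zero (hP _) (hP _))]
  congr 1
  field_simp [hP]
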